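/- Let T be a normal, steep rank-one transformation. Then T is not rationally weakly mixing: there is no measurable set F with 0 < μ(F) < ∞ such that for all measurable A, B ⊆ F, (1/a_n(F)) ∑_{k=0}^{n−1} |μ(A ∩ T^k B) − μ(A)μ(B) u_k(F)| → 0 as n → ∞. -/

import Mathlib

open MeasureTheory Filter Set Pointwise

/-- A rank-one cutting-and-stacking transformation of a subset `X ⊆ ℝ` (with Lebesgue
measure), given by columns `C n` consisting of `h n` levels (open intervals) of width `w n`,
with `pos n j` the left endpoint of the level of height `j` in column `C n`; column `C (n+1)`
is obtained from `C n` by cutting into `r n ≥ 2` subcolumns of equal width, adding `s n k`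
spacers above the `k`-th subcolumn, and stacking. -/
structure RankOne where
  X : Set ℝ
  T : ℝ ≃ᵐ ℝ
  r : ℕ → ℕ
  s : ℕ → ℕ → ℕ
  h : ℕ → ℕ
  w : ℕ → ℝ
  pos : ℕ → ℕ → ℝ
  hr : ∀ n, 2 ≤ r n
  h0 : h 0 = 1
  w0 : w 0 = 1
  pos0 : pos 0 0 = 0
  hrec : ∀ n, h (n + 1) = ∑ k ∈ Finset.range (r n), (h n + s n k)
  wrec : ∀ n, w (n + 1) = w n / (r n : ℝ)
  hX : X = ⋃ n, ⋃ j < h n, Set.Ioo (pos n j) (pos n j + w n)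
  disj : ∀ n, ∀ j < h n, ∀ j' < h n, j ≠ j' →
    Disjoint (Set.Ioo (pos n j) (pos n j + w n)) (Set.Ioo (pos n j') (pos n j' + w n))
  stack : ∀ n, ∀ j < h n, ∀ k < r n,
    pos (n + 1) ((∑ i ∈ Finset.range k, (h n + s n i)) + j) = pos n j + (k : ℝ) * w (n + 1)
  Tmap : ∀ n j, j + 1 < h n → ∀ x ∈ Set.Ioo (pos n j) (pos n j + w n),
    T x = x + (pos n (j + 1) - pos n j)
  Tbij : Set.BijOn (⇑T) X X
  Tpres : MeasurePreserving (⇑T) (volume.restrict X) (volume.restrict X)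

namespace RankOne

/-- The level of height `j` in column `C n`. -/
def lvl (S : RankOne) (n j : ℕ) : Set ℝ := Set.Ioo (S.pos n j) (S.pos n j + S.w n)

/-- The measure on the space: Lebesgue measure restricted to `X`. -/
noncomputable def μ (S : RankOne) : Measure ℝ := volume.restrict S.X

/-- The intrinsic weight sequence `u n F = μ(F ∩ TⁿF) / μ(F)²`. -/
noncomputable def u (S : RankOne) (F : Set ℝ) (n : ℕ) : ℝ :=
  (S.μ (F ∩ (⇑S.T)^[n] '' F)).toReal / (S.μ F).toReal ^ 2

/-- `a n F = ∑_{k<n} u k F`. -/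
noncomputable def a (S : RankOne) (F : Set ℝ) (n : ℕ) : ℝ :=
  ∑ k ∈ Finset.range n, S.u F k

/-- `T` is normal if spacers are added above the rightmost subcolumn infinitely often. -/
def Normal (S : RankOne) : Prop := ∀ m, ∃ n, m ≤ n ∧ 0 < S.s n (S.r n - 1)

/-- `T` grows exponentially: `2 s_{n, r_n - 1} ≥ h_{n+1}` for every `n`. -/
def ExpGrowing (S : RankOne) : Prop := ∀ n, S.h (n + 1) ≤ 2 * S.s n (S.r n - 1)

/-- `T` has a bounded number of cuts: `sup r_n < ∞`. -/
def BoundedCuts (S : RankOne) : Prop := ∃ c, ∀ n, S.r n ≤ c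

/-- `H n = {0} ∪ {∑_{k≤i} (h n + s n k) : 0 ≤ i < r n - 1}`. -/
def Hset (S : RankOne) (n : ℕ) : Finset ℕ :=
  insert 0 ((Finset.range (S.r n - 1)).image fun i => ∑ k ∈ Finset.range (i + 1), (S.h n + S.s n k))

/-- The set of heights in column `C N` of the descendants of the level of height `p`
in column `C j`: `D(J, N) = p + H j ⊕ H (j+1) ⊕ ⋯ ⊕ H (N-1)`. -/
def desc (S : RankOne) (j p : ℕ) : ℕ → Finset ℕ
  | 0 => {p}
  | N + 1 => if N < j then {p} else desc S j p N + S.Hset N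

/-- `M m`: the maximal height of a descendant of the unit interval `I` in column `C m`. -/
def M (S : RankOne) (m : ℕ) : ℕ := (S.desc 0 0 m).sup id

/-- The ergodic sum `S_n(1_F)(x) = ∑_{k<n} 1_F(T^k x)`. -/
noncomputable def birkhoff (S : RankOne) (F : Set ℝ) (n : ℕ) (x : ℝ) : ℝ :=
  ∑ k ∈ Finset.range n, Set.indicator F (fun _ => (1 : ℝ)) ((⇑S.T)^[k] x)

/-- `T` is rationally weakly mixing on `F`. -/
def RWMOn (S : RankOne) (F : Set ℝ) : Prop :=
  MeasurableSet F ∧ 0 < S.μ F ∧ S.μ F ≠ ⊤ ∧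
  ∀ A B : Set ℝ, MeasurableSet A → A ⊆ F → MeasurableSet B → B ⊆ F →
    Tendsto (fun n => (S.a F n)⁻¹ *
      ∑ k ∈ Finset.range n,
        |(S.μ (A ∩ (⇑S.T)^[k] '' B)).toReal - (S.μ A).toReal * (S.μ B).toReal * S.u F k|)
      atTop (nhds 0)

/-- `T` is rationally weakly mixing. -/
def RWM (S : RankOne) : Prop := ∃ F, S.RWMOn F

/-- `T` is rationally ergodic: some set `F` of positive finite measure satisfies a
Renyi inequality. -/
def RatErgodic (S : RankOne) : Prop :=
  ∃ (F : Set ℝ) (c : ℝ), MeasurableSet F ∧ 0 < S.μ F ∧ S.μ F ≠ ⊤ ∧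
    ∀ n, ∫ x in F, (S.birkhoff F n x) ^ 2 ∂S.μ ≤ c * (∫ x in F, S.birkhoff F n x ∂S.μ) ^ 2

/-- `T` is spectrally weakly mixing: every bounded measurable eigenfunction is a.e. constant. -/
def SpecWM (S : RankOne) : Prop :=
  ∀ (f : ℝ → ℂ) (z : ℂ), Measurable f → (∃ C, ∀ᵐ x ∂S.μ, ‖f x‖ ≤ C) →
    (∀ᵐ x ∂S.μ, f (S.T x) = z * f x) → ∃ c : ℂ, ∀ᵐ x ∂S.μ, f x = c

/-- `T` is zero-type: `μ(A ∩ TⁿA) → 0` for all `A` of finite measure. -/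
def ZeroType (S : RankOne) : Prop :=
  ∀ A : Set ℝ, MeasurableSet A → S.μ A ≠ ⊤ →
    Tendsto (fun n => S.μ (A ∩ (⇑S.T)^[n] '' A)) atTop (nhds 0)

/-- The `i`-th nonzero element of `H n` (for `i < r n - 1`): `e n i = ∑_{k ≤ i} (h n + s n k)`. -/
def e (S : RankOne) (n i : ℕ) : ℕ := ∑ k ∈ Finset.range (i + 1), (S.h n + S.s n k)

/-- `T` is steep: listing the nonzero elements of `H 0`, then `H 1`, etc., as `t 1, t 2, …`,
each successive element is at least `4` times the previous one. -/
def Steep (S : RankOne) : Prop :=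
  (∀ n i, i + 2 < S.r n → 4 * S.e n i ≤ S.e n (i + 1)) ∧
  (∀ n, 4 * S.e n (S.r n - 2) ≤ S.e (n + 1) 0)

/-- `T` is almost steep. -/
def AlmostSteep (S : RankOne) : Prop :=
  ∀ n, 3 ≤ S.r n ∧ S.s n 0 = 0 ∧ S.s n 1 = 1 ∧
    ∀ i, 2 ≤ i → i ≤ S.r n - 1 →
      4 * (∑ k ∈ Finset.range i, (S.h n + S.s n k)) ≤ ∑ k ∈ Finset.range (i + 1), (S.h n + S.s n k)

/-- `A` is a finite union of levels of `T`. -/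
def FinUnionLevels (S : RankOne) (A : Set ℝ) : Prop :=
  ∃ q : Finset (ℕ × ℕ), (∀ v ∈ q, v.2 < S.h v.1) ∧ A = ⋃ v ∈ q, S.lvl v.1 v.2

end RankOne

/-!
Let `L a` and `L b` be the sublevels in `C (n + 1)` of a level of `C n` that correspond to distinct
`a, b ∈ H n`. If `μ(L a ∩ Tᵏ L a) > 0`, then `k = x - y`, and if `μ(L a ∩ Tᵏ L b) > 0`, then
`k = (a - b) + (z - w)`, where `x, y, z, w` are sums of one element from each of
`H (n + 1), …, H (N - 1)`. As the nonzero heights grow by factors of at least `3`, the equation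
`x - y = (a - b) + (z - w)` is impossible. Hence for every `k` one of the two intersections is
null, so that for `A ⊆ L a` and `B ⊆ L b` the `k`-th terms of the averages for `(A, A)` and `(A, B)`
add up to at least a fixed multiple of `u k F`, and the two averages cannot both tend to `0`. A set
`F` of positive measure charges two such sublevels, because two generic points of `F` in a common
level are eventually separated by the columns.
-/

theorem add_eq_add_or_gap_of_lacunary {K : Set ℕ} {m : ℕ}
    (hlac : ∀ a ∈ K, ∀ b ∈ K, a < b → 3 * a ≤ b) (hmin : ∀ a ∈ K, a ≠ 0 → m ≤ a)
    {a b c d : ℕ} (ha : a ∈ K) (hb : b ∈ K) (hc : c ∈ K) (hd : d ∈ K) :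
    a + b = c + d ∨ a + b + m ≤ c + d ∨ c + d + m ≤ a + b := by
  have gap {x y : ℕ} (hx : x ∈ K) (hy : y ∈ K) (hxy : x < y) : x + m ≤ y := by
    have := hlac x hx y hy hxy
    have := hmin x hx
    have := hmin y hy
    omega
  have gap_add {x y z : ℕ} (hx : x ∈ K) (hy : y ∈ K) (hz : z ∈ K) (hxz : x < z) (hyz : y < z) :
      x + y + m ≤ z := by
    have := hlac x hx z hz hxz
    have := hlac y hy z hz hyz
    have := hmin x hx
    have := hmin y hy
    have := hmin z hz
    omega
  -- Cancel the largest of the four elements if it occurs on both sides; otherwise it dominates.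
  grind

theorem min_mul_le_abs_sub_add_abs_sub {x x' c c' u : ℝ} (hu : 0 ≤ u) (hx : x = 0 ∨ x' = 0) :
    min c c' * u ≤ |x - c * u| + |x' - c' * u| := by
  obtain rfl | rfl := hx
  · calc min c c' * u ≤ c * u := by gcongr; exact min_le_left c c'
      _ ≤ |0 - c * u| := by rw [zero_sub, abs_neg]; exact le_abs_self _
      _ ≤ |0 - c * u| + |x' - c' * u| := le_add_of_nonneg_right (abs_nonneg _)
  · calc min c c' * u ≤ c' * u := by gcongr; exact min_le_right c c'
      _ ≤ |0 - c' * u| := by rw [zero_sub, abs_neg]; exact le_abs_self _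
      _ ≤ |x - c * u| + |0 - c' * u| := le_add_of_nonneg_left (abs_nonneg _)

namespace RankOne

section Heights

variable (S : RankOne) {n N : ℕ}

theorem h_pos (n : ℕ) : 0 < S.h n := by
  induction n with
  | zero => simp [S.h0]
  | succ n ih =>
    have hr := S.hr n
    rw [S.hrec]
    exact Finset.sum_pos (fun _ _ => by omega) (Finset.nonempty_range_iff.2 (by omega))

theorem e_strictMono (n : ℕ) : StrictMono (S.e n) :=
  strictMono_nat_of_lt_succ fun i => by
    have := S.h_pos n
    rw [e, e, Finset.sum_range_succ _ (i + 1)]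
    omega

theorem e_pos (n i : ℕ) : 0 < S.e n i :=
  Finset.sum_pos (fun _ _ => Nat.add_pos_left (S.h_pos n) _) Finset.nonempty_range_add_one

theorem mem_Hset {t : ℕ} : t ∈ S.Hset n ↔ t = 0 ∨ ∃ i < S.r n - 1, S.e n i = t := by
  simp [Hset, e]

theorem mem_Hset_iff_exists_sum {t : ℕ} :
    t ∈ S.Hset n ↔ ∃ k < S.r n, ∑ i ∈ Finset.range k, (S.h n + S.s n i) = t := by
  have hr := S.hr n
  rw [mem_Hset]
  constructor
  · rintro (rfl | ⟨i, hi, rfl⟩)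
    · exact ⟨0, by omega, by simp⟩
    · exact ⟨i + 1, by omega, rfl⟩
  · rintro ⟨_ | i, hi, rfl⟩
    · simp
    · exact .inr ⟨i, by omega, rfl⟩

theorem e_zero_mem_Hset (n : ℕ) : S.e n 0 ∈ S.Hset n :=
  S.mem_Hset.2 (.inr ⟨0, by have := S.hr n; omega, rfl⟩)

theorem e_zero_le_of_mem_Hset {t : ℕ} (ht : t ∈ S.Hset n) (ht0 : t ≠ 0) : S.e n 0 ≤ t := by
  obtain rfl | ⟨i, -, rfl⟩ := S.mem_Hset.1 ht
  · contradiction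
  · exact (S.e_strictMono n).monotone i.zero_le

theorem add_lt_h_succ {j t : ℕ} (hj : j < S.h n) (ht : t ∈ S.Hset n) : j + t < S.h (n + 1) := by
  obtain ⟨k, hk, rfl⟩ := S.mem_Hset_iff_exists_sum.1 ht
  calc j + ∑ i ∈ Finset.range k, (S.h n + S.s n i)
      < ∑ i ∈ Finset.range (k + 1), (S.h n + S.s n i) := by rw [Finset.sum_range_succ]; omega
    _ ≤ ∑ i ∈ Finset.range (S.r n), (S.h n + S.s n i) :=
      Finset.sum_le_sum_of_subset (Finset.range_mono hk)
    _ = S.h (n + 1) := (S.hrec n).symm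

theorem desc_self (n p : ℕ) : S.desc n p n = {p} := by
  cases n <;> simp [desc]

theorem desc_succ (hnN : n ≤ N) (p : ℕ) : S.desc n p (N + 1) = S.desc n p N + S.Hset N := by
  rw [desc, if_neg hnN.not_gt]

theorem desc_eq_singleton_add (n p N : ℕ) : S.desc n p N = {p} + S.desc n 0 N := by
  induction N with
  | zero => simp [desc]
  | succ N ih =>
    rw [desc, desc]
    split_ifs
    · simp
    · rw [ih, add_assoc]

theorem mem_desc {p d : ℕ} : d ∈ S.desc n p N ↔ ∃ x ∈ S.desc n 0 N, p + x = d := by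
  rw [desc_eq_singleton_add, Finset.mem_add]
  simp only [Finset.mem_singleton, exists_eq_left]

theorem lt_h_of_mem_desc (hnN : n ≤ N) {j d : ℕ} (hj : j < S.h n) (hd : d ∈ S.desc n j N) :
    d < S.h N := by
  induction N, hnN using Nat.le_induction generalizing d with
  | base =>
    obtain rfl : d = j := by simpa [desc_self] using hd
    exact hj
  | succ N hnN ih =>
    rw [S.desc_succ hnN, Finset.mem_add] at hd
    obtain ⟨d', hd', t, ht, rfl⟩ := hd
    exact S.add_lt_h_succ (ih hd') ht

theorem add_mem_desc (hnN : n + 1 ≤ N) {t x : ℕ} (ht : t ∈ S.Hset n)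
    (hx : x ∈ S.desc (n + 1) 0 N) : t + x ∈ S.desc n 0 N := by
  induction N, hnN using Nat.le_induction generalizing x with
  | base =>
    obtain rfl : x = 0 := by simpa [desc_self] using hx
    simpa [S.desc_succ le_rfl, desc_self, Finset.mem_add] using ht
  | succ N hnN ih =>
    rw [S.desc_succ hnN, Finset.mem_add] at hx
    obtain ⟨x', hx', t', ht', rfl⟩ := hx
    rw [S.desc_succ (by omega), ← add_assoc]
    exact Finset.add_mem_add (ih hx') ht'

end Heights

section Lacunarity

/-- Steepness with an arbitrary ratio `q`: each nonzero element of `H 0, H 1, …`, listed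
successively, is at least `q` times the previous one. `S.Steep` is the case `q = 4`. -/
def SteepWith (S : RankOne) (q : ℕ) : Prop :=
  (∀ n i, i + 2 < S.r n → q * S.e n i ≤ S.e n (i + 1)) ∧
  (∀ n, q * S.e n (S.r n - 2) ≤ S.e (n + 1) 0)

variable {S : RankOne} {n N q : ℕ}

theorem Steep.steepWith (hS : S.Steep) (hq : q ≤ 4) : S.SteepWith q :=
  ⟨fun n i hi => (Nat.mul_le_mul_right _ hq).trans (hS.1 n i hi),
    fun n => (Nat.mul_le_mul_right _ hq).trans (hS.2 n)⟩

theorem SteepWith.mul_le_of_mem_Hset (hS : S.SteepWith q) {t t' : ℕ} (ht : t ∈ S.Hset n)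
    (ht' : t' ∈ S.Hset n) (hlt : t < t') : q * t ≤ t' := by
  obtain rfl | ⟨i, hi, rfl⟩ := S.mem_Hset.1 ht
  · simp
  obtain rfl | ⟨i', hi', rfl⟩ := S.mem_Hset.1 ht'
  · simp at hlt
  have hii' : i < i' := (S.e_strictMono n).lt_iff_lt.1 hlt
  exact (hS.1 n i (by omega)).trans ((S.e_strictMono n).monotone hii')

theorem SteepWith.mul_le_e_succ_zero (hS : S.SteepWith q) {t : ℕ} (ht : t ∈ S.Hset n) :
    q * t ≤ S.e (n + 1) 0 := by
  obtain rfl | ⟨i, hi, rfl⟩ := S.mem_Hset.1 ht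
  · simp
  · exact (Nat.mul_le_mul_left q ((S.e_strictMono n).monotone (by omega))).trans (hS.2 n)

theorem SteepWith.two_mul_lt_e_zero_of_mem_desc (hS : S.SteepWith 3) (hnN : n ≤ N) {d : ℕ}
    (hd : d ∈ S.desc n 0 N) : 2 * d < S.e N 0 := by
  induction N, hnN using Nat.le_induction generalizing d with
  | base =>
    obtain rfl : d = 0 := by simpa [desc_self] using hd
    exact S.e_pos n 0
  | succ N hnN ih =>
    rw [S.desc_succ hnN, Finset.mem_add] at hd
    obtain ⟨d', hd', t, ht, rfl⟩ := hd
    have hd'_lt := ih hd'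
    have ht_le := hS.mul_le_e_succ_zero ht
    have he_le := hS.mul_le_e_succ_zero (S.e_zero_mem_Hset N)
    omega

theorem SteepWith.add_desc_ne_add_desc (hS : S.SteepWith 3) {a b : ℕ} (ha : a ∈ S.Hset n)
    (hb : b ∈ S.Hset n) (hab : a ≠ b) (hnN : n + 1 ≤ N) {x y z w : ℕ}
    (hx : x ∈ S.desc (n + 1) 0 N) (hy : y ∈ S.desc (n + 1) 0 N)
    (hz : z ∈ S.desc (n + 1) 0 N) (hw : w ∈ S.desc (n + 1) 0 N) :
    a + (x + y) ≠ b + (z + w) := by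
  induction N, hnN using Nat.le_induction generalizing x y z w with
  | base =>
    simp only [desc_self, Finset.mem_singleton] at hx hy hz hw
    simpa [hx, hy, hz, hw] using hab
  | succ N hnN ih =>
    rw [S.desc_succ hnN, Finset.mem_add] at hx hy hz hw
    obtain ⟨x, hx, tx, htx, rfl⟩ := hx
    obtain ⟨y, hy, ty, hty, rfl⟩ := hy
    obtain ⟨z, hz, tz, htz, rfl⟩ := hz
    obtain ⟨w, hw, tw, htw, rfl⟩ := hw
    -- The contributions of `H N` cancel or differ by at least `e N 0`; the lower ones are distinct
    -- and differ by less than `e N 0`.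
    have htop := add_eq_add_or_gap_of_lacunary (K := S.Hset N) (m := S.e N 0)
      (fun _ ht _ ht' => hS.mul_le_of_mem_Hset ht ht') (fun _ => S.e_zero_le_of_mem_Hset)
      htx hty htz htw
    have hlow := ih hx hy hz hw
    have hax : 2 * (a + x) < S.e N 0 :=
      hS.two_mul_lt_e_zero_of_mem_desc (by omega) (S.add_mem_desc hnN ha hx)
    have hbz : 2 * (b + z) < S.e N 0 :=
      hS.two_mul_lt_e_zero_of_mem_desc (by omega) (S.add_mem_desc hnN hb hz)
    have hy_lt := hS.two_mul_lt_e_zero_of_mem_desc hnN hy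
    have hw_lt := hS.two_mul_lt_e_zero_of_mem_desc hnN hw
    omega

end Lacunarity

section Levels

variable (S : RankOne) {n N : ℕ}

theorem w_pos (n : ℕ) : 0 < S.w n := by
  induction n with
  | zero => simp [S.w0]
  | succ n ih =>
    have hr : 0 < S.r n := two_pos.trans_le (S.hr n)
    rw [S.wrec]
    positivity

theorem w_eq_mul_w_succ (n : ℕ) : S.w n = S.r n * S.w (n + 1) := by
  have hr : (S.r n : ℝ) ≠ 0 := by exact_mod_cast (two_pos.trans_le (S.hr n)).ne'
  rw [S.wrec, mul_div_cancel₀ _ hr]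

theorem tendsto_w : Tendsto S.w atTop (nhds 0) := by
  have w_le (n : ℕ) : S.w n ≤ (1 / 2 : ℝ) ^ n := by
    induction n with
    | zero => simp [S.w0]
    | succ n ih =>
      have hr : (2 : ℝ) ≤ S.r n := by exact_mod_cast S.hr n
      have := S.w_eq_mul_w_succ n
      rw [pow_succ]
      nlinarith [S.w_pos (n + 1)]
  exact squeeze_zero (fun n => (S.w_pos n).le) w_le
    (tendsto_pow_atTop_nhds_zero_of_lt_one (by norm_num) (by norm_num))

theorem eq_of_mem_lvl {i j : ℕ} {x : ℝ} (hi : i < S.h n) (hj : j < S.h n)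
    (hxi : x ∈ S.lvl n i) (hxj : x ∈ S.lvl n j) : i = j := by
  by_contra hij
  exact Set.disjoint_left.1 (S.disj n i hi j hj hij) hxi hxj

theorem abs_sub_le_w_of_mem_lvl {j : ℕ} {x y : ℝ} (hx : x ∈ S.lvl n j) (hy : y ∈ S.lvl n j) :
    |x - y| ≤ S.w n := by
  obtain ⟨hx₁, hx₂⟩ := hx
  obtain ⟨hy₁, hy₂⟩ := hy
  rw [abs_le]
  constructor <;> linarith

theorem iterate_mem_lvl {j k : ℕ} {x : ℝ} (hjk : j + k < S.h n) (hx : x ∈ S.lvl n j) :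
    S.T^[k] x ∈ S.lvl n (j + k) := by
  induction k with
  | zero => exact hx
  | succ k ih =>
    obtain ⟨hlow, hhigh⟩ := ih (by omega)
    rw [Function.iterate_succ_apply', S.Tmap n (j + k) hjk _ ⟨hlow, hhigh⟩]
    constructor <;> rw [← add_assoc] <;> linarith

theorem exists_mem_lvl_succ {j : ℕ} {x : ℝ} (hj : j < S.h n) (hx : x ∈ S.lvl n j)
    (hcut : ∀ k : ℕ, x ≠ S.pos n j + k * S.w (n + 1)) :
    ∃ t ∈ S.Hset n, x ∈ S.lvl (n + 1) (j + t) := by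
  obtain ⟨hlow, hhigh⟩ := hx
  have hw := S.w_pos (n + 1)
  -- The subcolumn of `x` is the integer part of its position measured in new widths.
  set q := (x - S.pos n j) / S.w (n + 1) with hq
  have hxq : x = S.pos n j + q * S.w (n + 1) := by rw [hq]; field_simp; ring
  have hq0 : 0 ≤ q := div_nonneg (by linarith) hw.le
  have hqr : q < S.r n := by
    rw [hq, div_lt_iff₀ hw, ← S.w_eq_mul_w_succ]
    linarith
  have hk : ⌊q⌋₊ < S.r n := (Nat.floor_lt hq0).2 hqr
  have hfloor_lt : (⌊q⌋₊ : ℝ) < q :=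
    (Nat.floor_le hq0).lt_of_ne fun h => hcut ⌊q⌋₊ (by rw [h]; exact hxq)
  have hlt_floor : q < ⌊q⌋₊ + 1 := Nat.lt_floor_add_one q
  refine ⟨_, S.mem_Hset_iff_exists_sum.2 ⟨⌊q⌋₊, hk, rfl⟩, ?_⟩
  rw [lvl, add_comm j, S.stack n j hj _ hk]
  constructor <;> rw [hxq] <;> nlinarith

/-- Points which, from each level containing them, descend to a level of every later column:
they are never on the boundary of a subcolumn. -/
def IsCutFree (x : ℝ) : Prop :=
  ∀ n, ∀ j < S.h n, x ∈ S.lvl n j → ∃ t ∈ S.Hset n, x ∈ S.lvl (n + 1) (j + t)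

variable {S}

theorem IsCutFree.exists_mem_desc {x : ℝ} (hx : S.IsCutFree x) (hnN : n ≤ N) {j : ℕ}
    (hj : j < S.h n) (hxj : x ∈ S.lvl n j) : ∃ d ∈ S.desc n j N, x ∈ S.lvl N d := by
  induction N, hnN using Nat.le_induction with
  | base => exact ⟨j, by simp [desc_self], hxj⟩
  | succ N hnN ih =>
    obtain ⟨d, hd, hxd⟩ := ih
    obtain ⟨t, ht, hxt⟩ := hx N d (S.lt_h_of_mem_desc hnN hj hd) hxd
    exact ⟨d + t, by rw [S.desc_succ hnN]; exact Finset.add_mem_add hd ht, hxt⟩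

theorem IsCutFree.exists_separating_sublevels {x y : ℝ} (hx : S.IsCutFree x)
    (hy : S.IsCutFree y) (hxy : x ≠ y) {j : ℕ} (hj : j < S.h n) (hxj : x ∈ S.lvl n j)
    (hyj : y ∈ S.lvl n j) :
    ∃ m, ∃ i < S.h m, ∃ a ∈ S.Hset m, ∃ b ∈ S.Hset m, a ≠ b ∧
      x ∈ S.lvl (m + 1) (i + a) ∧ y ∈ S.lvl (m + 1) (i + b) := by
  by_contra! hsep
  have common_level (N : ℕ) (hnN : n ≤ N) : ∃ i < S.h N, x ∈ S.lvl N i ∧ y ∈ S.lvl N i := by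
    induction N, hnN using Nat.le_induction with
    | base => exact ⟨j, hj, hxj, hyj⟩
    | succ N _ ih =>
      obtain ⟨i, hi, hxi, hyi⟩ := ih
      obtain ⟨a, ha, hxa⟩ := hx N i hi hxi
      obtain ⟨b, hb, hyb⟩ := hy N i hi hyi
      obtain rfl : a = b := by
        by_contra hab
        exact hsep N i hi a ha b hb hab hxa hyb
      exact ⟨i + a, S.add_lt_h_succ hi ha, hxa, hyb⟩
  have hdist : |x - y| ≤ 0 := ge_of_tendsto S.tendsto_w <| by
    filter_upwards [eventually_ge_atTop n] with N hnN
    obtain ⟨i, -, hxi, hyi⟩ := common_level N hnN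
    exact S.abs_sub_le_w_of_mem_lvl hxi hyi
  exact hxy (sub_eq_zero.1 (abs_nonpos_iff.1 hdist))

end Levels

section Measure

variable (S : RankOne) {n N : ℕ}

instance : NullSingletonClass S.μ := by unfold μ; infer_instance

theorem measure_lvl_le (n j : ℕ) : S.μ (S.lvl n j) ≤ ENNReal.ofReal (S.w n) :=
  calc S.μ (S.lvl n j) ≤ volume (S.lvl n j) := Measure.restrict_le_self _
    _ = ENNReal.ofReal (S.w n) := by simp [lvl, Real.volume_Ioo]

theorem ae_isCutFree : ∀ᵐ x ∂S.μ, S.IsCutFree x := by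
  have hcut : ∀ᵐ x ∂S.μ, ∀ n j k : ℕ, x ≠ S.pos n j + k * S.w (n + 1) := by
    simp only [ae_all_iff]
    exact fun n j k => S.μ.ae_ne _
  filter_upwards [hcut] with x hx n j hj hxj
  exact S.exists_mem_lvl_succ hj hxj (hx n j)

theorem ae_exists_mem_lvl : ∀ᵐ x ∂S.μ, ∃ n, ∃ j < S.h n, x ∈ S.lvl n j := by
  have hX : MeasurableSet S.X := by
    rw [S.hX]
    exact .iUnion fun _ => .iUnion fun _ => .iUnion fun _ => measurableSet_Ioo
  filter_upwards [ae_restrict_mem hX] with x hx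
  simp only [S.hX, mem_iUnion] at hx
  obtain ⟨n, j, hj, hxj⟩ := hx
  exact ⟨n, j, hj, hxj⟩

theorem ae_measure_inter_lvl_ne_zero (F : Set ℝ) :
    ∀ᵐ x ∂S.μ, x ∈ F → ∀ n j, x ∈ S.lvl n j → S.μ (F ∩ S.lvl n j) ≠ 0 := by
  have h (n j : ℕ) : ∀ᵐ x ∂S.μ, S.μ (F ∩ S.lvl n j) = 0 → x ∉ F ∩ S.lvl n j := by
    by_cases h0 : S.μ (F ∩ S.lvl n j) = 0
    · filter_upwards [measure_eq_zero_iff_ae_notMem.1 h0] with x hx _ using hx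
    · simp [h0]
  filter_upwards [ae_all_iff.2 fun n => ae_all_iff.2 (h n)] with x hx hxF n j hxj h0
  exact hx n j h0 ⟨hxF, hxj⟩

theorem exists_two_sublevels_measure_ne_zero {F : Set ℝ} (hF : S.μ F ≠ 0) :
    ∃ n, ∃ j < S.h n, ∃ a ∈ S.Hset n, ∃ b ∈ S.Hset n, a ≠ b ∧
      S.μ (F ∩ S.lvl (n + 1) (j + a)) ≠ 0 ∧ S.μ (F ∩ S.lvl (n + 1) (j + b)) ≠ 0 := by
  have hcharged := S.ae_measure_inter_lvl_ne_zero F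
  obtain ⟨x₀, hx₀F, ⟨n, j, hj, hx₀j⟩, hx₀⟩ :=
    ((frequently_ae_mem_iff.2 hF).and_eventually
      (S.ae_exists_mem_lvl.and hcharged)).exists
  have hFj := frequently_ae_mem_iff.2 (hx₀ hx₀F n j hx₀j)
  obtain ⟨x, ⟨hxF, hxj⟩, hx_cut, hx⟩ := (hFj.and_eventually (S.ae_isCutFree.and hcharged)).exists
  obtain ⟨y, ⟨hyF, hyj⟩, hyx, hy_cut, hy⟩ := (hFj.and_eventually
    ((S.μ.ae_ne x).and (S.ae_isCutFree.and hcharged))).exists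
  obtain ⟨m, i, hi, a, ha, b, hb, hab, hxa, hyb⟩ :=
    hx_cut.exists_separating_sublevels hy_cut hyx.symm hj hxj hyj
  exact ⟨m, i, hi, a, ha, b, hb, hab, hx hxF _ _ hxa, hy hyF _ _ hyb⟩

theorem measure_preimage_iterate (k : ℕ) (A : Set ℝ) : S.μ (S.T^[k] ⁻¹' A) = S.μ A := by
  induction k with
  | zero => rfl
  | succ k ih =>
    rw [Function.iterate_succ, preimage_comp]
    exact (S.Tpres.measure_preimage_equiv _).trans ih

theorem measure_inter_image_iterate (k : ℕ) (A B : Set ℝ) :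
    S.μ (A ∩ S.T^[k] '' B) = S.μ (S.T^[k] ⁻¹' A ∩ B) := by
  rw [← S.measure_preimage_iterate k, preimage_inter,
    preimage_image_eq _ (S.T.injective.iterate k)]

theorem ae_iterate (k : ℕ) {p : ℝ → Prop} (hp : ∀ᵐ x ∂S.μ, p x) : ∀ᵐ x ∂S.μ, p (S.T^[k] x) :=
  (S.measure_preimage_iterate k _).trans hp

theorem measure_top_levels_le (N k : ℕ) :
    S.μ (⋃ d ∈ Finset.Ico (S.h N - k) (S.h N), S.lvl N d) ≤ k * ENNReal.ofReal (S.w N) :=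
  calc S.μ (⋃ d ∈ Finset.Ico (S.h N - k) (S.h N), S.lvl N d)
      ≤ ∑ d ∈ Finset.Ico (S.h N - k) (S.h N), S.μ (S.lvl N d) := measure_biUnion_finset_le _ _
    _ ≤ (Finset.Ico (S.h N - k) (S.h N)).card • ENNReal.ofReal (S.w N) :=
      Finset.sum_le_card_nsmul _ _ _ fun d _ => S.measure_lvl_le N d
    _ ≤ k * ENNReal.ofReal (S.w N) := by
      rw [nsmul_eq_mul, Nat.card_Ico]
      gcongr
      omega

theorem measure_lvl_inter_image_le {i j k : ℕ} (hnN : n ≤ N) (hi : i < S.h n) (hj : j < S.h n)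
    (hdesc : ∀ d ∈ S.desc n j N, d + k ∉ S.desc n i N) :
    S.μ (S.lvl n i ∩ S.T^[k] '' S.lvl n j) ≤ k * ENNReal.ofReal (S.w N) := by
  rw [measure_inter_image_iterate]
  refine (measure_mono_ae ?_).trans (S.measure_top_levels_le N k)
  filter_upwards [S.ae_isCutFree, S.ae_iterate k S.ae_isCutFree] with x hx hTx ⟨hTxi, hxj⟩
  obtain ⟨d, hd, hxd⟩ := hx.exists_mem_desc hnN hj hxj
  obtain ⟨d', hd', hTxd'⟩ := hTx.exists_mem_desc hnN hi hTxi
  have hd_lt := S.lt_h_of_mem_desc hnN hj hd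
  -- Below the top `k` levels, `T^k` moves `x` from the level `d` to the level `d + k`.
  have htop : S.h N ≤ d + k := by
    by_contra! hdk
    have hd'_eq : d' = d + k := S.eq_of_mem_lvl (S.lt_h_of_mem_desc hnN hi hd') hdk hTxd'
      (S.iterate_mem_lvl hdk hxd)
    exact hdesc d hd (hd'_eq ▸ hd')
  exact mem_iUnion₂.2 ⟨d, Finset.mem_Ico.2 ⟨by omega, hd_lt⟩, hxd⟩

theorem eventually_exists_desc_of_measure_ne_zero {i j k : ℕ} (hi : i < S.h n) (hj : j < S.h n)
    (hpos : S.μ (S.lvl n i ∩ S.T^[k] '' S.lvl n j) ≠ 0) :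
    ∀ᶠ N in atTop, ∃ d ∈ S.desc n j N, d + k ∈ S.desc n i N := by
  have hlim : Tendsto (fun N => (k : ENNReal) * ENNReal.ofReal (S.w N)) atTop (nhds 0) := by
    simpa using ENNReal.Tendsto.const_mul (ENNReal.tendsto_ofReal S.tendsto_w)
      (.inr (ENNReal.natCast_ne_top k))
  filter_upwards [hlim.eventually_lt_const (pos_iff_ne_zero.2 hpos), eventually_ge_atTop n]
    with N hlt hnN
  by_contra! hdesc
  exact (S.measure_lvl_inter_image_le hnN hi hj hdesc).not_gt hlt

variable {S}

theorem SteepWith.measure_inter_image_eq_zero_or (hS : S.SteepWith 3) {j a b : ℕ}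
    (hj : j < S.h n) (ha : a ∈ S.Hset n) (hb : b ∈ S.Hset n) (hab : a ≠ b) (k : ℕ) :
    S.μ (S.lvl (n + 1) (j + a) ∩ S.T^[k] '' S.lvl (n + 1) (j + a)) = 0 ∨
      S.μ (S.lvl (n + 1) (j + a) ∩ S.T^[k] '' S.lvl (n + 1) (j + b)) = 0 := by
  by_contra! hpos
  have hja := S.add_lt_h_succ hj ha
  have hjb := S.add_lt_h_succ hj hb
  obtain ⟨N, ⟨⟨y, hy, hyk⟩, ⟨w, hw, hwk⟩⟩, hnN⟩ :=
    (((S.eventually_exists_desc_of_measure_ne_zero hja hja hpos.1).and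
      (S.eventually_exists_desc_of_measure_ne_zero hja hjb hpos.2)).and
      (eventually_ge_atTop (n + 1))).exists
  rw [mem_desc] at hy hyk hw hwk
  obtain ⟨y, hy, rfl⟩ := hy
  obtain ⟨x, hx, hxk⟩ := hyk
  obtain ⟨w, hw, rfl⟩ := hw
  obtain ⟨z, hz, hzk⟩ := hwk
  exact hS.add_desc_ne_add_desc ha hb hab hnN hy hz hx hw (by omega)

end Measure

section RationalWeakMixing

variable {S : RankOne} {F : Set ℝ}

theorem u_nonneg (S : RankOne) (F : Set ℝ) (k : ℕ) : 0 ≤ S.u F k := by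
  unfold u
  positivity

theorem a_pos (hF0 : S.μ F ≠ 0) (hF : S.μ F ≠ ⊤) {N : ℕ} (hN : 0 < N) : 0 < S.a F N := by
  have hFpos := ENNReal.toReal_pos hF0 hF
  have hu0 : 0 < S.u F 0 := by
    simp only [u, Function.iterate_zero, image_id, inter_self]
    positivity
  exact Finset.sum_pos' (fun k _ => S.u_nonneg F k) ⟨0, Finset.mem_range.2 hN, hu0⟩

theorem RWMOn.exists_measure_inter_image_ne_zero (hF : S.RWMOn F) {A B A' B' : Set ℝ}
    (hA : MeasurableSet A) (hAF : A ⊆ F) (hA0 : S.μ A ≠ 0)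
    (hB : MeasurableSet B) (hBF : B ⊆ F) (hB0 : S.μ B ≠ 0)
    (hA' : MeasurableSet A') (hA'F : A' ⊆ F) (hA'0 : S.μ A' ≠ 0)
    (hB' : MeasurableSet B') (hB'F : B' ⊆ F) (hB'0 : S.μ B' ≠ 0) :
    ∃ k, S.μ (A ∩ S.T^[k] '' B) ≠ 0 ∧ S.μ (A' ∩ S.T^[k] '' B') ≠ 0 := by
  obtain ⟨-, hF0, hFtop, hmix⟩ := hF
  by_contra! hzero
  have toReal_pos {C : Set ℝ} (hCF : C ⊆ F) (hC0 : S.μ C ≠ 0) : 0 < (S.μ C).toReal :=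
    ENNReal.toReal_pos hC0 (ne_top_of_le_ne_top hFtop (measure_mono hCF))
  set c := (S.μ A).toReal * (S.μ B).toReal
  set c' := (S.μ A').toReal * (S.μ B').toReal
  have hcpos : 0 < min c c' :=
    lt_min (mul_pos (toReal_pos hAF hA0) (toReal_pos hBF hB0))
      (mul_pos (toReal_pos hA'F hA'0) (toReal_pos hB'F hB'0))
  have hnull (k : ℕ) : (S.μ (A ∩ S.T^[k] '' B)).toReal = 0 ∨
      (S.μ (A' ∩ S.T^[k] '' B')).toReal = 0 := by
    by_cases h0 : S.μ (A ∩ S.T^[k] '' B) = 0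
    · simp [h0]
    · simp [hzero k h0]
  have hlim := (hmix A B hA hAF hB hBF).add (hmix A' B' hA' hA'F hB' hB'F)
  rw [add_zero] at hlim
  refine hcpos.not_ge (ge_of_tendsto hlim ?_)
  filter_upwards [eventually_gt_atTop 0] with N hN
  have ha := a_pos hF0.ne' hFtop hN
  rw [← mul_add, ← Finset.sum_add_distrib, le_inv_mul_iff₀ ha, mul_comm, a, Finset.mul_sum]
  exact Finset.sum_le_sum fun k _ =>
    min_mul_le_abs_sub_add_abs_sub (S.u_nonneg F k) (hnull k)

end RationalWeakMixing

end RankOne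

theorem statement10_general (S : RankOne) (hS : S.SteepWith 3) : ¬ S.RWM := by
  rintro ⟨F, hF⟩
  obtain ⟨n, j, hj, a, ha, b, hb, hab, hA0, hB0⟩ :=
    S.exists_two_sublevels_measure_ne_zero hF.2.1.ne'
  have hmeas (i : ℕ) : MeasurableSet (F ∩ S.lvl (n + 1) i) := hF.1.inter measurableSet_Ioo
  obtain ⟨k, hAA, hAB⟩ := hF.exists_measure_inter_image_ne_zero
    (hmeas _) inter_subset_left hA0 (hmeas _) inter_subset_left hA0
    (hmeas _) inter_subset_left hA0 (hmeas _) inter_subset_left hB0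
  have inter_null {i i' : ℕ}
      (h0 : S.μ (S.lvl (n + 1) i ∩ S.T^[k] '' S.lvl (n + 1) i') = 0) :
      S.μ ((F ∩ S.lvl (n + 1) i) ∩ S.T^[k] '' (F ∩ S.lvl (n + 1) i')) = 0 :=
    measure_mono_null (inter_subset_inter inter_subset_right (image_mono inter_subset_right)) h0
  exact (hS.measure_inter_image_eq_zero_or hj ha hb hab k).elim
    (fun h0 => hAA (inter_null h0)) (fun h0 => hAB (inter_null h0))

/-- A normal, steep rank-one transformation is not rationally weakly
mixing. -/
theorem statement10 (S : RankOne) (hnorm : S.Normal) (hsteep : S.Steep) :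
    ¬ S.RWM :=
  statement10_general S (hsteep.steepWith (by norm_num))
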